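/- Let x₁, x₂, x₃, x₄ ∈ ℝ² be the nodes of a quadrilateral with exactly one re-entrant (concave) vertex, say cross(x₂−x₁,x₄−x₁) < 0 while the corresponding cross products at the other three nodes are strictly positive. Then the Jacobian determinant of the isoparametric bilinear map φ takes both strictly positive and strictly negative values on the parametric square [−1,1]², and its zero set intersects the square in a nonempty set (so the square divides into a positive-Jacobian region J⁺ and a nonempty negative-Jacobian region J⁻). -/

import Mathlib

/-- Bilinear shape functions on the reference square `[-1,1]²`. -/
noncomputable def N1 (ξ η : ℝ) : ℝ := (1 - ξ) * (1 - η) / 4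
noncomputable def N2 (ξ η : ℝ) : ℝ := (1 + ξ) * (1 - η) / 4
noncomputable def N3 (ξ η : ℝ) : ℝ := (1 + ξ) * (1 + η) / 4
noncomputable def N4 (ξ η : ℝ) : ℝ := (1 - ξ) * (1 + η) / 4

/-- Isoparametric bilinear map of the Q4 element with nodes `x₁, x₂, x₃, x₄ ∈ ℝ²`. -/
noncomputable def bilinearMap (x1 x2 x3 x4 : ℝ × ℝ) (p : ℝ × ℝ) : ℝ × ℝ :=
  N1 p.1 p.2 • x1 + N2 p.1 p.2 • x2 + N3 p.1 p.2 • x3 + N4 p.1 p.2 • x4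

/-- 2D cross product `a₁b₂ − a₂b₁`. -/
def cross (a b : ℝ × ℝ) : ℝ := a.1 * b.2 - a.2 * b.1

/-!
The Jacobian determinant at the `i`-th corner of the reference square is a quarter of the cross
product of the two edges leaving the `i`-th node. Corners of opposite orientation therefore give
Jacobians of opposite sign, and the intermediate value theorem on the connected square gives a zero.
-/

/-- The corner of the reference square which `bilinearMap` sends to the `i`-th node. Nodes are
indexed by `Fin 4`, so that `i + 1` and `i - 1` are the cyclic neighbours of `i`. -/
def refCorner : Fin 4 → ℝ × ℝ := ![(-1, -1), (1, -1), (1, 1), (-1, 1)]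

/-- Cross product of the edges leaving the `i`-th node of a quadrilateral `x`. Its sign records
whether the quadrilateral turns left (positive) or right (negative) at that node. -/
def cornerCross (x : Fin 4 → ℝ × ℝ) (i : Fin 4) : ℝ :=
  cross (x (i + 1) - x i) (x (i - 1) - x i)

theorem refCorner_mem_Icc (i : Fin 4) : refCorner i ∈ Set.Icc ((-1, -1) : ℝ × ℝ) (1, 1) := by
  fin_cases i <;> norm_num [refCorner, Prod.le_def]

theorem det_eq_cross (L : ℝ × ℝ →L[ℝ] ℝ × ℝ) : L.det = cross (L (1, 0)) (L (0, 1)) := by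
  rw [ContinuousLinearMap.det, ← LinearMap.det_toMatrix (Module.Basis.finTwoProd ℝ),
    Matrix.det_fin_two]
  simp [LinearMap.toMatrix_apply, cross, mul_comm]

section BilinearMap

variable (x1 x2 x3 x4 : ℝ × ℝ)

theorem contDiff_bilinearMap {n : WithTop ℕ∞} : ContDiff ℝ n (bilinearMap x1 x2 x3 x4) := by
  unfold bilinearMap N1 N2 N3 N4
  fun_prop

theorem hasFDerivAt_bilinearMap (p : ℝ × ℝ) :
    HasFDerivAt (bilinearMap x1 x2 x3 x4)
      ((ContinuousLinearMap.toSpanSingleton ℝ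
          (((1 - p.2) / 4) • (x2 - x1) + ((1 + p.2) / 4) • (x3 - x4))).coprod
        (ContinuousLinearMap.toSpanSingleton ℝ
          (((1 - p.1) / 4) • (x4 - x1) + ((1 + p.1) / 4) • (x3 - x2)))) p := by
  have hξ : HasFDerivAt Prod.fst (ContinuousLinearMap.fst ℝ ℝ ℝ) p := hasFDerivAt_fst
  have hη : HasFDerivAt Prod.snd (ContinuousLinearMap.snd ℝ ℝ ℝ) p := hasFDerivAt_snd
  have hN1 := ((hξ.const_sub 1).mul (hη.const_sub 1)).mul_const (4⁻¹ : ℝ)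
  have hN2 := ((hξ.const_add 1).mul (hη.const_sub 1)).mul_const (4⁻¹ : ℝ)
  have hN3 := ((hξ.const_add 1).mul (hη.const_add 1)).mul_const (4⁻¹ : ℝ)
  have hN4 := ((hξ.const_sub 1).mul (hη.const_add 1)).mul_const (4⁻¹ : ℝ)
  refine ((((hN1.smul_const x1).add (hN2.smul_const x2)).add (hN3.smul_const x3)).add
    (hN4.smul_const x4)).congr_fderiv ?_
  refine ContinuousLinearMap.ext fun v ↦ ?_
  simp only [add_apply, neg_apply, smul_apply, smul_eq_mul, ContinuousLinearMap.smulRight_apply,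
    ContinuousLinearMap.coe_fst', ContinuousLinearMap.coe_snd', ContinuousLinearMap.coprod_apply,
    ContinuousLinearMap.toSpanSingleton_apply]
  module

theorem det_fderiv_bilinearMap (p : ℝ × ℝ) :
    (fderiv ℝ (bilinearMap x1 x2 x3 x4) p).det =
      cross (((1 - p.2) / 4) • (x2 - x1) + ((1 + p.2) / 4) • (x3 - x4))
        (((1 - p.1) / 4) • (x4 - x1) + ((1 + p.1) / 4) • (x3 - x2)) := by
  rw [(hasFDerivAt_bilinearMap x1 x2 x3 x4 p).fderiv, det_eq_cross]
  simp

theorem continuous_det_fderiv_bilinearMap :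
    Continuous fun p ↦ (fderiv ℝ (bilinearMap x1 x2 x3 x4) p).det :=
  ContinuousLinearMap.continuous_det.comp
    ((contDiff_bilinearMap x1 x2 x3 x4).continuous_fderiv one_ne_zero)

end BilinearMap

theorem det_fderiv_bilinearMap_refCorner (x : Fin 4 → ℝ × ℝ) (i : Fin 4) :
    (fderiv ℝ (bilinearMap (x 0) (x 1) (x 2) (x 3)) (refCorner i)).det = cornerCross x i / 4 := by
  rw [det_fderiv_bilinearMap]
  fin_cases i <;>
    simp only [refCorner, cornerCross, cross, Fin.isValue, Fin.zero_eta, Fin.mk_one,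
      Fin.reduceFinMk, Fin.reduceAdd, Fin.reduceSub, Matrix.cons_val, Prod.fst_add, Prod.snd_add,
      Prod.fst_sub, Prod.snd_sub, Prod.smul_fst, Prod.smul_snd, smul_eq_mul] <;>
    ring

theorem concave_quad_jacobian_changes_sign_general (x : Fin 4 → ℝ × ℝ) {i j : Fin 4}
    (hi : cornerCross x i < 0) (hj : 0 < cornerCross x j) :
    (∃ p ∈ Set.Icc ((-1, -1) : ℝ × ℝ) (1, 1),
        (fderiv ℝ (bilinearMap (x 0) (x 1) (x 2) (x 3)) p).det > 0) ∧
    (∃ p ∈ Set.Icc ((-1, -1) : ℝ × ℝ) (1, 1),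
        (fderiv ℝ (bilinearMap (x 0) (x 1) (x 2) (x 3)) p).det < 0) ∧
    (∃ p ∈ Set.Icc ((-1, -1) : ℝ × ℝ) (1, 1),
        (fderiv ℝ (bilinearMap (x 0) (x 1) (x 2) (x 3)) p).det = 0) := by
  have hneg : (fderiv ℝ (bilinearMap (x 0) (x 1) (x 2) (x 3)) (refCorner i)).det < 0 := by
    rw [det_fderiv_bilinearMap_refCorner]
    linarith
  have hpos : 0 < (fderiv ℝ (bilinearMap (x 0) (x 1) (x 2) (x 3)) (refCorner j)).det := by
    rw [det_fderiv_bilinearMap_refCorner]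
    linarith
  have hzero := (convex_Icc ((-1, -1) : ℝ × ℝ) (1, 1)).isPreconnected.intermediate_value
    (refCorner_mem_Icc i) (refCorner_mem_Icc j)
    (continuous_det_fderiv_bilinearMap (x 0) (x 1) (x 2) (x 3)).continuousOn ⟨hneg.le, hpos.le⟩
  exact ⟨⟨refCorner j, refCorner_mem_Icc j, hpos⟩, ⟨refCorner i, refCorner_mem_Icc i, hneg⟩, hzero⟩

/-- For a quadrilateral with exactly one re-entrant (concave) vertex (here the
first node), the Jacobian determinant of the isoparametric bilinear map takes
both strictly positive and strictly negative values on the parametric square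
`[-1,1]²`, and its zero set meets the square: the square divides into a
positive-Jacobian region `J⁺` and a nonempty negative-Jacobian region `J⁻`. -/
theorem concave_quad_jacobian_changes_sign (x1 x2 x3 x4 : ℝ × ℝ)
    (h1 : cross (x2 - x1) (x4 - x1) < 0)
    (h2 : cross (x3 - x2) (x1 - x2) > 0)
    (h3 : cross (x4 - x3) (x2 - x3) > 0)
    (h4 : cross (x1 - x4) (x3 - x4) > 0) :
    (∃ p ∈ Set.Icc ((-1, -1) : ℝ × ℝ) (1, 1),
        (fderiv ℝ (bilinearMap x1 x2 x3 x4) p).det > 0) ∧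
    (∃ p ∈ Set.Icc ((-1, -1) : ℝ × ℝ) (1, 1),
        (fderiv ℝ (bilinearMap x1 x2 x3 x4) p).det < 0) ∧
    (∃ p ∈ Set.Icc ((-1, -1) : ℝ × ℝ) (1, 1),
        (fderiv ℝ (bilinearMap x1 x2 x3 x4) p).det = 0) :=
  concave_quad_jacobian_changes_sign_general ![x1, x2, x3, x4] (i := 0) (j := 1) h1 h2
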